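/- arXiv:2409.16206 — 3 statements merged into one kernel-verified Lean document; each statement's English description precedes it below -/
import Mathlib

section
/- Let R be a unique factorization domain (a commutative integral domain with unique factorization) and let d ≥ 3 be an integer such that the image of d−1 in R is nonzero (i.e. the characteristic of R does not divide d−1). Then no polynomial in R[x] of degree d is (d−1)-superirreducible over R. Equivalently: for every irreducible polynomial f ∈ R[x] of degree d, there exists a nonconstant polynomial g ∈ R[x] of degree at most d−1 such that f(g(x)) is not irreducible in R[x]. -/
open Polynomial

/-- A polynomial `f ∈ R[x]` is `k`-superirreducible over `R` if it is irreducible and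
`f(g(x))` is irreducible for every nonconstant `g ∈ R[x]` of degree at most `k`. -/
def IsSuperirreducible (R : Type*) [CommRing R] [IsDomain R] (k : ℕ) (f : Polynomial R) : Prop :=
  Irreducible f ∧ ∀ g : Polynomial R, 0 < g.natDegree → g.natDegree ≤ k →
    Irreducible (f.comp g)

/-- Over a field, an irreducible `F` of degree `d ≥ 3` with `d - 1 ≠ 0` admits `G` with zero
constant term, degree `d - 1`, such that no `F(G(c x))` with `c ≠ 0` is irreducible. -/
theorem field_aux (K : Type*) [Field K] (d : ℕ) (hd : 3 ≤ d) (hchar : ((d - 1 : ℕ) : K) ≠ 0)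
    (F : Polynomial K) (hF : F.natDegree = d) (hirr : Irreducible F) :
    ∃ G : Polynomial K, G.coeff 0 = 0 ∧ G.natDegree = d - 1 ∧
      ∀ c : K, c ≠ 0 → ¬ Irreducible (F.comp (G.comp (C c * X))) := by
  have hlc : F.coeff d ≠ 0 := by
    rw [← hF]; exact leadingCoeff_ne_zero.mpr hirr.ne_zero
  obtain ⟨r, hr⟩ : ∃ r : K, F.coeff (d-1) + ((d - 1 : ℕ) : K) * F.coeff d * r = 0 :=
    ⟨-F.coeff (d-1) / (((d - 1 : ℕ) : K) * F.coeff d), by field_simp; ring⟩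
  set h := taylor r F with hh
  have hhdeg : h.natDegree = d := by rw [hh, natDegree_taylor, hF]
  have hFr : F.eval r ≠ 0 := by
    intro h0
    have := degree_eq_one_of_irreducible_of_root hirr h0
    have h1 : F.natDegree = 1 := natDegree_eq_of_degree_eq_some this
    omega
  have hh0 : h.coeff 0 ≠ 0 := by rwa [hh, taylor_coeff_zero]
  have hhd : h.coeff d = F.coeff d := by
    have h1 : h.leadingCoeff = F.leadingCoeff := by rw [hh, leadingCoeff_taylor]
    rwa [leadingCoeff, leadingCoeff, hhdeg, hF] at h1
  have hhd1 : h.coeff (d-1) = F.coeff (d-1) + (d : K) * F.coeff d * r := by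
    rw [hh, taylor_coeff, eval_eq_sum_range' (n := 2)]
    · simp only [Finset.sum_range_succ, Finset.sum_range_zero, hasseDeriv_coeff]
      have e1 : 1 + (d - 1) = d := by omega
      have e2 : d.choose (d-1) = d := by
        rw [Nat.choose_symm (by omega : 1 ≤ d), Nat.choose_one_right]
      simp [e1, e2]
    · have := natDegree_hasseDeriv_le F (d-1)
      omega
  set p := h.reverse with hp
  have hpdeg : p.natDegree = d := by
    rw [hp, reverse_natDegree, natTrailingDegree_eq_zero.mpr (Or.inr hh0), hhdeg, Nat.sub_zero]
  have hp0 : p.coeff 0 = F.coeff d := by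
    rw [hp, coeff_zero_reverse, leadingCoeff, hhdeg, hhd]
  have hp1 : p.coeff 1 = F.coeff (d-1) + (d : K) * F.coeff d * r := by
    rw [hp, coeff_reverse, hhdeg, revAt_le (by omega), hhd1]
  set a := F.coeff d with ha
  refine ⟨C (-a⁻¹) * p.divX + C r, ?_, ?_, ?_⟩
  · simp only [coeff_add, coeff_C_mul, coeff_C_zero, coeff_divX, zero_add, hp1]
    have : (d : K) = ((d - 1 : ℕ) : K) + 1 := by
      rw [← Nat.cast_succ]; congr 1; omega
    rw [this]
    field_simp
    linear_combination -hr
  · rw [natDegree_add_C, natDegree_C_mul (by simpa using hlc), natDegree_divX_eq_natDegree_tsub_one,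
      hpdeg]
  · intro c hc hI
    set G := C (-a⁻¹) * p.divX + C r with hG
    have hGdeg : G.natDegree = d - 1 := by
      rw [hG, natDegree_add_C, natDegree_C_mul (by simpa using hlc),
        natDegree_divX_eq_natDegree_tsub_one, hpdeg]
    let L := AlgebraicClosure K
    obtain ⟨θ, hθ⟩ := IsAlgClosed.exists_aeval_eq_zero L F
      (by rw [degree_eq_natDegree hirr.ne_zero, hF]; exact_mod_cast (by omega : d ≠ 0))
    have hne : θ - algebraMap K L r ≠ 0 := by
      intro h0
      rw [sub_eq_zero] at h0
      rw [h0, aeval_algebraMap_apply, coe_aeval_eq_eval] at hθ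
      exact hFr ((map_eq_zero _).mp hθ)
    have hhθ : aeval (θ - algebraMap K L r) h = 0 := by
      rw [hh, taylor_apply, aeval_comp]; simpa using hθ
    have hpα : aeval (θ - algebraMap K L r)⁻¹ p = 0 := by
      letI := invertibleOfNonzero hne
      have h1 := (eval₂_reverse_eq_zero_iff (algebraMap K L) (θ - algebraMap K L r) h).mpr hhθ
      rwa [invOf_eq_inv] at h1
    set α := (θ - algebraMap K L r)⁻¹ with hα
    have hα0 : α ≠ 0 := inv_ne_zero hne
    have hGα : aeval α G = θ := by
      have h1 := divX_mul_X_add p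
      rw [← h1, hp0] at hpα
      simp only [map_add, map_mul, aeval_X, aeval_C] at hpα
      simp only [hG, map_add, map_mul, aeval_C, map_neg, map_inv₀]
      have ha' : algebraMap K L a ≠ 0 := by simpa using hlc
      have h2 : (θ - algebraMap K L r) * α = 1 := mul_inv_cancel₀ hne
      have h3 : algebraMap K L a * (θ - algebraMap K L r) = - (aeval α) p.divX := by
        apply mul_right_cancel₀ hα0
        linear_combination algebraMap K L a * h2 + hpα
      apply mul_left_cancel₀ ha'
      have h4 : algebraMap K L a * (algebraMap K L a)⁻¹ = 1 := mul_inv_cancel₀ ha'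
      linear_combination -h3 - (aeval α) p.divX * h4
    have hc' : algebraMap K L c ≠ 0 := by simpa using hc
    set β := α / algebraMap K L c with hβ
    have hcβ : algebraMap K L c * β = α := by exact mul_div_cancel₀ α hc'
    have hroot : aeval β (F.comp (G.comp (C c * X))) = 0 := by
      simp [aeval_comp, hcβ, hGα, hθ]
    have hroot2 : aeval β (p.comp (C c * X)) = 0 := by
      simp [aeval_comp, hcβ, hpα]
    have hcX : (C c * X : K[X]).natDegree = 1 := natDegree_C_mul_X c hc
    have hpc : (p.comp (C c * X)).natDegree = d := by rw [natDegree_comp, hcX, hpdeg, mul_one]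
    have hdvd : F.comp (G.comp (C c * X)) ∣ p.comp (C c * X) := by
      have h1 := minpoly.dvd K β hroot2
      have h2 := minpoly.eq_of_irreducible hI hroot
      rw [← h2] at h1
      exact dvd_of_mul_right_dvd h1
    have hle := natDegree_le_of_dvd hdvd (by intro h0; rw [h0] at hpc; simp at hpc; omega)
    rw [hpc, natDegree_comp, natDegree_comp, hcX, hGdeg, hF] at hle
    have : d * 2 ≤ d * ((d-1) * 1) := Nat.mul_le_mul_left _ (by omega)
    omega

theorem no_superirreducible_of_degree_over_ufd (R : Type*) [CommRing R] [IsDomain R]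
    [UniqueFactorizationMonoid R] (d : ℕ) (hd : 3 ≤ d) (hchar : ((d - 1 : ℕ) : R) ≠ 0)
    (f : Polynomial R) (hf : f.natDegree = d) :
    ¬ IsSuperirreducible R (d - 1) f := by
  rintro ⟨hirr, hall⟩
  let K := FractionRing R
  have hinj : Function.Injective (algebraMap R K) := IsFractionRing.injective R K
  letI : NormalizedGCDMonoid R := Classical.choice inferInstance
  have key : ∀ q : R[X], Irreducible q → q.natDegree ≠ 0 →
      Irreducible (q.map (algebraMap R K)) := fun q hq h0 =>
    ((hq.isPrimitive h0).irreducible_iff_irreducible_map_fraction_map).mp hq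
  obtain ⟨G, hG0, hGd, hG⟩ := field_aux K d hd
    (by
      intro h0
      apply hchar
      apply hinj
      rw [map_natCast, h0, map_zero])
    (f.map (algebraMap R K)) (by rw [natDegree_map_eq_of_injective hinj, hf])
    (key f hirr (by omega))
  obtain ⟨c, hcm, hc⟩ := IsLocalization.integerNormalization_spec (nonZeroDivisors R) G
  have hc0 : c ≠ 0 := nonZeroDivisors.ne_zero hcm
  have hc0' : algebraMap R K c ≠ 0 := by
    rw [Ne, map_eq_zero_iff _ hinj]; exact hc0
  have hl : G.comp (C (algebraMap R K c) * X) ∈ lifts (algebraMap R K) := by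
    rw [lifts_iff_coeff_lifts]
    intro n
    rw [comp_C_mul_X_coeff]
    rcases n with _ | n
    · exact ⟨0, by simp [hG0]⟩
    · refine ⟨(IsLocalization.integerNormalization (nonZeroDivisors R) G).coeff (n+1) * c ^ n, ?_⟩
      have h1 := congrArg (fun q => coeff q (n+1)) hc
      simp only [coeff_map, coeff_smul] at h1
      rw [Algebra.smul_def] at h1
      rw [map_mul, h1, map_pow]
      ring
  obtain ⟨g, hg⟩ := (mem_lifts _).mp hl
  have hgd : g.natDegree = d - 1 := by
    rw [← natDegree_map_eq_of_injective hinj g, hg, natDegree_comp, natDegree_C_mul_X _ hc0', hGd,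
      mul_one]
  have h1 := hall g (by omega) (by omega)
  have h2 := key _ h1 (by
    rw [natDegree_comp, hgd, hf]
    exact Nat.mul_ne_zero (by omega) (by omega))
  rw [Polynomial.map_comp, hg] at h2
  exact hG _ hc0' h2
end

section
/- The polynomial x⁴ + 2 ∈ ℚ[x] is 2-superirreducible over ℚ: it is irreducible in ℚ[x], and for every nonconstant polynomial g ∈ ℚ[x] of degree at most 2, the composition (x⁴+2)∘g is irreducible in ℚ[x]. -/
open Polynomial

/-- Splitting a coprime factorisation of `2^j * w^4`. -/
theorem split_aux (j u v w : ℕ) (h : Nat.Coprime u v) (hv : Odd v) (e : u * v = 2 ^ j * w ^ 4) :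
    ∃ c d : ℕ, u = 2 ^ j * c ^ 4 ∧ v = d ^ 4 ∧ c * d = w := by
  have h2 : Nat.Coprime (2 ^ j) v := Nat.Coprime.pow_left _ (Nat.coprime_two_left.2 hv)
  have hd : 2 ^ j ∣ u := h2.dvd_of_dvd_mul_right (Dvd.intro _ e.symm)
  obtain ⟨t, rfl⟩ := hd
  have e' : t * v = w ^ 4 := by
    have : 2 ^ j * (t * v) = 2 ^ j * w ^ 4 := by rw [← e]; ring
    exact Nat.eq_of_mul_eq_mul_left (by positivity) this
  have hc : Nat.Coprime t v := Nat.Coprime.coprime_mul_left h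
  obtain ⟨c, hc'⟩ := exists_eq_pow_of_mul_eq_pow (Nat.isUnit_iff.2 hc) e'
  obtain ⟨d, hd'⟩ := exists_eq_pow_of_mul_eq_pow (Nat.isUnit_iff.2 hc.symm)
    (by rw [mul_comm]; exact e')
  refine ⟨c, d, by rw [hc'], hd', ?_⟩
  rw [hc', hd', ← mul_pow] at e'
  exact Nat.pow_left_injective (n := 4) (by norm_num) e'

theorem descent (y : ℕ) : ∀ x z : ℕ, 0 < y → Nat.Coprime x y → x ^ 4 + 2 * y ^ 4 = z ^ 2 →
    False := by
  induction y using Nat.strong_induction_on with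
  | _ y ih =>
  intro x z hy hxy e
  have hx : Odd x := by
    by_contra hx
    rw [Nat.not_odd_iff_even] at hx
    obtain ⟨m, hm⟩ := hx
    have hyo : Odd y := by
      rw [← Nat.coprime_two_left]
      exact Nat.Coprime.coprime_dvd_left ⟨m, by omega⟩ hxy
    obtain ⟨n, hn⟩ := hyo
    have hz : Even z := by
      have : Even (z ^ 2) := by rw [← e, hm]; exact ⟨8 * m ^ 4 + y ^ 4, by ring⟩
      exact (Nat.even_pow.1 this).1
    obtain ⟨k, hk⟩ := hz
    subst hm hn hk
    ring_nf at e
    omega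
  have hz : Odd z := by
    have : Odd (z ^ 2) := by rw [← e]; exact (hx.pow).add_even ⟨y ^ 4, by ring⟩
    exact Nat.Odd.of_mul_left (by rwa [pow_two] at this)
  have hlt : x ^ 2 < z := by
    have : 0 < y ^ 4 := by positivity
    nlinarith
  obtain ⟨u, hu⟩ : ∃ u, z = x ^ 2 + 2 * u := by
    obtain ⟨k, hk⟩ := Nat.Odd.sub_odd hz (hx.pow (n := 2))
    exact ⟨k, by omega⟩
  have e1 : 2 * (u * (x ^ 2 + u)) = y ^ 4 := by subst hu; nlinarith
  obtain ⟨Y, hY⟩ : ∃ Y, y = 2 * Y :=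
    Nat.prime_two.dvd_of_dvd_pow (Dvd.intro _ e1)
  have e2 : u * (x ^ 2 + u) = 2 ^ 3 * Y ^ 4 := by subst hY; nlinarith
  have cux : Nat.Coprime u (x ^ 2) := by
    have : Nat.Coprime (y ^ 4) (x ^ 2) := (hxy.symm).pow _ _
    exact Nat.Coprime.coprime_dvd_left ⟨2 * (x ^ 2 + u), by rw [← e1]; ring⟩ this
  have cuv : Nat.Coprime u (x ^ 2 + u) := by simpa using cux
  rcases Nat.even_or_odd u with hue | huo
  swap
  · obtain ⟨c, d, h1, h2, -⟩ := split_aux 3 (x ^ 2 + u) u Y cuv.symm huo (by rw [← e2]; ring)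
    obtain ⟨p, hp⟩ := hx
    have hd : Odd d := by
      rw [h2] at huo; exact (Nat.odd_pow_iff (by norm_num)).1 huo
    obtain ⟨q, hq⟩ := hd
    rw [h2] at h1
    subst hp hq
    ring_nf at h1
    omega
  obtain ⟨a, b, h1, h2, h3⟩ := split_aux 3 u (x ^ 2 + u) Y cuv ((hx.pow).add_even hue) e2
  have hab : 0 < a ∧ 0 < b := by
    constructor <;> (apply Nat.pos_of_ne_zero; rintro rfl; simp at h3; omega)
  have hb : Odd b := by
    have : Odd (b ^ 4) := by rw [← h2]; exact (hx.pow).add_even hue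
    exact (Nat.odd_pow_iff (by norm_num)).1 this
  have e3 : x ^ 2 + 8 * a ^ 4 = b ^ 4 := by rw [← h2, h1]; norm_num
  have hlt : x < b ^ 2 := by
    have : 0 < a ^ 4 := pow_pos hab.1 4
    by_contra hh
    push Not at hh
    nlinarith
  obtain ⟨s, hs⟩ : ∃ s, b ^ 2 = x + 2 * s := by
    obtain ⟨k, hk⟩ := Nat.Odd.sub_odd (hb.pow (n := 2)) hx
    exact ⟨k, by omega⟩
  have e4 : s * (x + s) = 2 ^ 1 * a ^ 4 := by
    have : b ^ 4 = (x + 2 * s) ^ 2 := by rw [← hs]; ring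
    nlinarith
  have csx : Nat.Coprime s (x + s) := by
    have h4 : Nat.Coprime (2 ^ 1 * a ^ 4) x := by
      apply Nat.Coprime.mul_left
      · exact (Nat.coprime_two_left.2 hx).pow_left 1
      · apply Nat.Coprime.pow_left
        exact Nat.Coprime.coprime_dvd_left ⟨2 * b, by rw [hY, ← h3]; ring⟩ hxy.symm
    have : Nat.Coprime s x := Nat.Coprime.coprime_dvd_left ⟨_, e4.symm⟩ h4
    simpa using this
  have key : ∀ c d : ℕ, c * d = a → Nat.Coprime (2 ^ 1 * c ^ 4) (d ^ 4) →
      2 * c ^ 4 + d ^ 4 = b ^ 2 → False := by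
    intro c d h5 h6 h7
    have hc : 0 < c := by apply Nat.pos_of_ne_zero; rintro rfl; simp at h5; omega
    have hd : 0 < d := by apply Nat.pos_of_ne_zero; rintro rfl; simp at h5; omega
    have h8 : Nat.Coprime c d := by
      have := Nat.Coprime.coprime_mul_left h6
      exact (Nat.coprime_pow_left_iff (by norm_num) _ _).1
        ((Nat.coprime_pow_right_iff (by norm_num) _ _).1 this)
    refine ih c ?_ d b hc h8.symm (by rw [← h7]; ring)
    rw [hY, ← h3, ← h5]
    have : 0 < d * b := Nat.mul_pos hd hab.2
    nlinarith
  rcases Nat.even_or_odd s with hse | hso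
  · obtain ⟨c, d, h5, h6, h7⟩ := split_aux 1 s (x + s) a csx (hx.add_even hse) e4
    refine key c d h7 (by rw [← h5, ← h6]; exact csx) ?_
    rw [← h6, hs]; omega
  · obtain ⟨c, d, h5, h6, h7⟩ := split_aux 1 (x + s) s a csx.symm hso (by rw [← e4]; ring)
    refine key c d h7 (by rw [← h5, ← h6]; exact csx.symm) ?_
    rw [← h6, hs]; omega

theorem no_rat (c w : ℚ) (h : c ^ 4 + 2 = w ^ 2) : False := by
  have hq : (c.den : ℚ) ≠ 0 := by exact_mod_cast c.den_nz
  have h1 : (c.num : ℚ) ^ 4 + 2 * (c.den : ℚ) ^ 4 = (w * c.den ^ 2) ^ 2 := by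
    have : (c.num : ℚ) = c * c.den := (Rat.mul_den_eq_num c).symm
    rw [this]
    linear_combination (c.den : ℚ) ^ 4 * h
  have h2 : IsSquare ((c.num ^ 4 + 2 * (c.den : ℤ) ^ 4 : ℤ) : ℚ) :=
    ⟨w * c.den ^ 2, by push_cast; rw [h1]; ring⟩
  rw [Rat.isSquare_intCast_iff] at h2
  obtain ⟨z, hz⟩ := h2
  refine descent c.den c.num.natAbs z.natAbs c.den_pos c.reduced ?_
  zify
  rw [Even.pow_abs (by decide), sq_abs, hz]
  ring

theorem irr_base : Irreducible (X ^ 4 + 2 : ℚ[X]) := by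
  have h : Irreducible (X ^ 4 + 2 : ℤ[X]) := by
    have hm : (X ^ 4 + 2 : ℤ[X]).Monic := by monicity!
    have hdeg : (X ^ 4 + 2 : ℤ[X]).natDegree = 4 := by compute_degree!
    refine IsEisensteinAt.irreducible (𝓟 := Ideal.span {(2 : ℤ)}) ?_ ?_ hm.isPrimitive
      (by rw [hdeg]; norm_num)
    · refine ⟨?_, ?_, ?_⟩
      · rw [hm.leadingCoeff, Ideal.mem_span_singleton]; norm_num
      · intro n hn
        rw [hdeg] at hn
        rw [Ideal.mem_span_singleton]
        have h4 : (X ^ 4 + 2 : ℤ[X]) = X ^ 4 + C 2 := by simp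
        rw [h4, coeff_add, coeff_X_pow, coeff_C]
        rw [if_neg (by omega)]
        split_ifs <;> simp
      · rw [Ideal.span_singleton_pow, Ideal.mem_span_singleton]
        simp [coeff_zero_eq_eval_zero]
    · exact (Ideal.span_singleton_prime (by norm_num)).2 Int.prime_two
  have hm : (X ^ 4 + 2 : ℤ[X]).Monic := by monicity!
  have := (hm.irreducible_iff_irreducible_map_fraction_map (K := ℚ)).1 h
  simpa using this

theorem irr_scaled (a : ℚ) (ha : a ≠ 0) : Irreducible (X ^ 4 + C (2 / a ^ 4) : ℚ[X]) := by
  have : Invertible a := invertibleOfNonzero ha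
  have h := (MulEquiv.irreducible_iff (algEquivCMulXAddC a 0)).2 irr_base
  have h2 : algEquivCMulXAddC a 0 (X ^ 4 + 2 : ℚ[X]) = C (a ^ 4) * (X ^ 4 + C (2 / a ^ 4)) := by
    rw [mul_add, ← C_mul, mul_div_cancel₀ _ (pow_ne_zero 4 ha)]
    simp [algEquivCMulXAddC_apply, mul_pow]
    exact map_ofNat (aeval (C a * X : ℚ[X])) 2
  rw [h2] at h
  exact (irreducible_isUnit_mul (isUnit_C.2 (pow_ne_zero 4 ha).isUnit)).1 h

open IntermediateField in
theorem norm_aux {K E : Type*} [Field K] [Field E] [Algebra K E] (x : E) (hx : IsIntegral K x) (e : K) :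
    Algebra.norm K (algebraMap K K⟮x⟯ e - AdjoinSimple.gen K x) = (minpoly K x).eval e := by
  have h := charpoly_leftMulMatrix (adjoin.powerBasis hx)
  rw [adjoin.powerBasis_gen, minpoly_gen] at h
  rw [← h, Matrix.eval_charpoly, Algebra.norm_eq_matrix_det (adjoin.powerBasis hx).basis, map_sub,
    AlgHom.commutes]
  rfl

open IntermediateField in
theorem irr_monic {K : Type*} [Field K] (h20 : (2 : K) ≠ 0) (t : K)
    (hirr : Irreducible (X ^ 4 + C t : K[X])) (hno : ∀ e n : K, e ^ 4 + t ≠ n ^ 2)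
    (g : K[X]) (hg : g.Monic) (h0 : 0 < g.natDegree)
    (h2 : g.natDegree ≤ 2) : Irreducible ((X ^ 4 + C t : K[X]).comp g) := by
  have hfm : (X ^ 4 + C t : K[X]).Monic := by monicity!
  refine irreducible_comp hfm hg hirr ?_
  intro E _ _ x hx
  have hint : IsIntegral K x := by
    by_contra hn
    rw [minpoly.eq_zero hn] at hx
    exact hfm.ne_zero hx.symm
  have hdeg : (g.map (algebraMap K K⟮x⟯) - C (AdjoinSimple.gen K x)).natDegree = g.natDegree := by
    rw [natDegree_sub_C, natDegree_map]
  rcases Nat.lt_or_ge g.natDegree 2 with hlt | hge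
  · apply irreducible_of_degree_eq_one
    refine (degree_eq_iff_natDegree_eq_of_pos one_pos).2 ?_
    rw [hdeg]
    omega
  have hd2 : g.natDegree = 2 := le_antisymm h2 hge
  rw [irreducible_iff_roots_eq_zero_of_degree_le_three (by rw [hdeg]; omega)
    (by rw [hdeg]; omega)]
  rw [Multiset.eq_zero_iff_forall_notMem]
  intro s hs
  have hs := isRoot_of_mem_roots hs
  rw [IsRoot, eval_sub, eval_C, eval_map, eval₂_eq_sum_range, hd2] at hs
  have hl : g.coeff 2 = 1 := by rw [← hd2]; exact hg
  simp only [Finset.sum_range_succ, Finset.sum_range_zero, hl, map_one] at hs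
  set b := g.coeff 1
  set c := g.coeff 0
  have hN := norm_aux x hint (c - b ^ 2 / 4)
  have hsq : algebraMap K K⟮x⟯ (c - b ^ 2 / 4) - AdjoinSimple.gen K x
      = -1 * (s + algebraMap K K⟮x⟯ (b / 2)) ^ 2 := by
    have h4 : c - b ^ 2 / 4 = c - (b / 2) ^ 2 := by rw [div_pow]; norm_num
    have h5 : algebraMap K K⟮x⟯ b = 2 * algebraMap K K⟮x⟯ (b / 2) := by
      rw [← map_ofNat (algebraMap K K⟮x⟯) 2, ← map_mul, mul_div_cancel₀ _ h20]
    rw [h4, map_sub, map_pow]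
    rw [h5] at hs
    linear_combination hs
  have hfin : Module.finrank K K⟮x⟯ = 4 := by
    rw [adjoin.finrank hint, hx]; compute_degree!
  have hm1 : Algebra.norm K (-1 : K⟮x⟯) = 1 := by
    have : (-1 : K⟮x⟯) = algebraMap K K⟮x⟯ (-1) := by simp
    rw [this, Algebra.norm_algebraMap, hfin]; norm_num
  rw [hsq, map_mul, map_pow, hm1, hx] at hN
  simp only [eval_add, eval_pow, eval_X, eval_C] at hN
  exact hno _ _ (by rw [← hN, one_mul])

theorem x4_add_two_superirreducible :
    IsSuperirreducible ℚ 2 (X ^ 4 + 2) := by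
  refine ⟨irr_base, ?_⟩
  intro g h0 h2
  have hg : g ≠ 0 := by rintro rfl; simp at h0
  set a := g.leadingCoeff with ha'
  have ha : a ≠ 0 := leadingCoeff_ne_zero.2 hg
  have hC : (C a : ℚ[X]) * C a⁻¹ = 1 := by rw [← C_mul, mul_inv_cancel₀ ha, C_1]
  have hno : ∀ e n : ℚ, e ^ 4 + 2 / a ^ 4 ≠ n ^ 2 := by
    intro e n hN
    refine no_rat (a * e) (a ^ 2 * n) ?_
    have : a ^ 4 * (2 / a ^ 4) = 2 := mul_div_cancel₀ _ (pow_ne_zero 4 ha)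
    linear_combination a ^ 4 * hN - this
  have h := irr_monic two_ne_zero (2 / a ^ 4) (irr_scaled a ha) hno (g * C a⁻¹) (monic_mul_leadingCoeff_inv hg)
    (by rwa [natDegree_mul_C (inv_ne_zero ha)]) (by rwa [natDegree_mul_C (inv_ne_zero ha)])
  have e : (X ^ 4 + 2 : ℚ[X]).comp g
      = C (a ^ 4) * (X ^ 4 + C (2 / a ^ 4) : ℚ[X]).comp (g * C a⁻¹) := by
    have h1 : (C (a ^ 4) : ℚ[X]) * C (2 / a ^ 4) = 2 := by
      rw [← C_mul, mul_div_cancel₀ _ (pow_ne_zero 4 ha)]; rfl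
    have h3 : (X ^ 4 + 2 : ℚ[X]).comp g = g ^ 4 + 2 := by simp
    rw [h3, add_comp, pow_comp, X_comp, C_comp, mul_add, h1, C_pow, ← mul_pow]
    congr 2
    linear_combination -g * hC
  rw [e]
  exact (irreducible_isUnit_mul (isUnit_C.2 (pow_ne_zero 4 ha).isUnit)).2 h
end

section
/- Let p be a prime number with p ≡ 3, 13, or 11 (mod 16) (that is, p ≡ ±3 or −5 (mod 16)). If the polynomial x⁴ + 4p ∈ ℚ[x] is irreducible over ℚ, then it is 2-superirreducible over ℚ; and if the polynomial x⁴ − p ∈ ℚ[x] is irreducible over ℚ, then it is 2-superirreducible over ℚ. -/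
open Polynomial

lemma cop_add {s t : ℤ} (h : IsCoprime (s + t) (s * t)) : IsCoprime s t := by
  obtain ⟨u, v, h⟩ := h.of_mul_right_left
  exact ⟨u + v, u, by linarith⟩

lemma cop_sub {s t : ℤ} (h : IsCoprime (t - s) (s * t)) : IsCoprime s t := by
  obtain ⟨u, v, h⟩ := h.of_mul_right_left
  exact ⟨v - u, u, by linarith⟩

lemma fourth_mod (t : ℤ) : (t % 2 = 0 ∧ t ^ 4 % 16 = 0) ∨ (t % 2 = 1 ∧ t ^ 4 % 16 = 1) := by
  have h : t % 16 = 0 ∨ t % 16 = 1 ∨ t % 16 = 2 ∨ t % 16 = 3 ∨ t % 16 = 4 ∨ t % 16 = 5 ∨ t % 16 = 6 ∨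
    t % 16 = 7 ∨ t % 16 = 8 ∨ t % 16 = 9 ∨ t % 16 = 10 ∨ t % 16 = 11 ∨ t % 16 = 12 ∨ t % 16 = 13 ∨
    t % 16 = 14 ∨ t % 16 = 15 := by omega
  have h2 : t % 2 = (t % 16) % 2 := by omega
  rcases h with h | h | h | h | h | h | h | h | h | h | h | h | h | h | h | h <;>
    simp [h2, pow_succ, Int.mul_emod, h]

lemma sq_mod (t : ℤ) : (t % 2 = 0 ∧ (t ^ 2 % 16 = 0 ∨ t ^ 2 % 16 = 4)) ∨
    (t % 2 = 1 ∧ (t ^ 2 % 16 = 1 ∨ t ^ 2 % 16 = 9)) := by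
  have h : t % 16 = 0 ∨ t % 16 = 1 ∨ t % 16 = 2 ∨ t % 16 = 3 ∨ t % 16 = 4 ∨ t % 16 = 5 ∨ t % 16 = 6 ∨
    t % 16 = 7 ∨ t % 16 = 8 ∨ t % 16 = 9 ∨ t % 16 = 10 ∨ t % 16 = 11 ∨ t % 16 = 12 ∨ t % 16 = 13 ∨
    t % 16 = 14 ∨ t % 16 = 15 := by omega
  have h2 : t % 2 = (t % 16) % 2 := by omega
  rcases h with h | h | h | h | h | h | h | h | h | h | h | h | h | h | h | h <;>
    simp [h2, pow_succ, Int.mul_emod, h]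

lemma mulP_mod {P : ℤ} (h16 : P % 16 = 3 ∨ P % 16 = 13 ∨ P % 16 = 11) (t : ℤ) :
    (t % 2 = 0 ∧ P * t ^ 4 % 16 = 0) ∨ (t % 2 = 1 ∧ P * t ^ 4 % 16 = P % 16) := by
  rcases fourth_mod t with ⟨h, h'⟩ | ⟨h, h'⟩
  · left; simp [h, Int.mul_emod, h']
  · right; simp [h, Int.mul_emod, h']

lemma not_both_even {a b : ℤ} (h : IsCoprime a b) : ¬ (a % 2 = 0 ∧ b % 2 = 0) := by
  rintro ⟨ha, hb⟩
  have := h.isUnit_of_dvd' (Int.dvd_of_emod_eq_zero ha) (Int.dvd_of_emod_eq_zero hb)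
  norm_num [Int.isUnit_iff] at this

lemma odd_cop {a : ℤ} (h : a % 2 = 1) : IsCoprime 2 a :=
  ⟨-(a / 2), 1, by omega⟩

lemma sq_of_pos_cop {a b c : ℤ} (ha : 0 < a) (h : IsCoprime a b) (heq : a * b = c ^ 2) :
    ∃ d, 0 ≤ d ∧ a = d ^ 2 := by
  obtain ⟨d, hd | hd⟩ := Int.sq_of_isCoprime h heq
  · exact ⟨|d|, abs_nonneg d, by rw [sq_abs, hd]⟩
  · nlinarith [sq_nonneg d]

lemma fourth_of_cop {x y e : ℤ} (hx : 0 < x) (hy : 0 < y) (h : IsCoprime x y)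
    (heq : x * y = e ^ 4) : ∃ a b : ℤ, x = a ^ 4 ∧ y = b ^ 4 ∧ |e| = |a| * |b| := by
  have key : ∀ x y : ℤ, 0 < x → 0 < y → IsCoprime x y → x * y = e ^ 4 → ∃ a, x = a ^ 4 := by
    intro x y hx hy h heq
    obtain ⟨A, hA0, hA⟩ := sq_of_pos_cop hx h (c := e ^ 2) (by rw [heq]; ring)
    obtain ⟨B, hB0, hB⟩ := sq_of_pos_cop hy h.symm (c := e ^ 2) (by rw [mul_comm, heq]; ring)
    have hAB : A * B = e ^ 2 := by
      have : (A * B) ^ 2 = (e ^ 2) ^ 2 := by rw [mul_pow, ← hA, ← hB, heq]; ring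
      exact (pow_left_inj₀ (mul_nonneg hA0 hB0) (sq_nonneg e) two_ne_zero).1 this
    have hAp : 0 < A := lt_of_le_of_ne hA0 (by rintro rfl; simp at hA; omega)
    have hc : IsCoprime A B := by
      rw [hA, hB] at h
      exact (IsCoprime.pow_iff two_pos two_pos).1 h
    obtain ⟨d, -, hd⟩ := sq_of_pos_cop hAp hc hAB
    exact ⟨d, by rw [hA, hd]; ring⟩
  obtain ⟨a, ha⟩ := key x y hx hy h heq
  obtain ⟨b, hb⟩ := key y x hy hx h.symm (by rw [mul_comm, heq])
  refine ⟨a, b, ha, hb, ?_⟩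
  have : |e| ^ 4 = (|a| * |b|) ^ 4 := by
    rw [← abs_mul, ← abs_pow, ← abs_pow, ← heq, ha, hb, mul_pow]
  exact (pow_left_inj₀ (abs_nonneg e) (by positivity) four_ne_zero).1 this

lemma split {P : ℤ} (hP : Prime P) (hpos : 0 < P) {x y e : ℤ} (hx : 0 < x) (hy : 0 < y)
    (h : IsCoprime x y) (heq : x * y = P * e ^ 4) :
    ∃ a b : ℤ, IsCoprime a b ∧ |e| = |a| * |b| ∧
      ((x = a ^ 4 ∧ y = P * b ^ 4) ∨ (y = a ^ 4 ∧ x = P * b ^ 4)) := by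
  have key : ∀ x y : ℤ, 0 < x → 0 < y → IsCoprime x y → x * y = P * e ^ 4 → P ∣ y →
      ∃ a b : ℤ, IsCoprime a b ∧ |e| = |a| * |b| ∧ (x = a ^ 4 ∧ y = P * b ^ 4) := by
    rintro x _ hx hy h heq ⟨y, rfl⟩
    have hy' : 0 < y := by
      by_contra hh
      nlinarith
    have h' : IsCoprime x y := h.of_mul_right_right
    have heq' : x * y = e ^ 4 := by
      apply mul_left_cancel₀ hpos.ne'
      rw [← heq]; ring
    obtain ⟨a, b, rfl, rfl, hab⟩ := fourth_of_cop hx hy' h' heq'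
    exact ⟨a, b, (IsCoprime.pow_iff four_pos four_pos).1 h', hab, rfl, rfl⟩
  have hd : P ∣ x * y := ⟨_, heq⟩
  rcases hP.dvd_or_dvd hd with hd | hd
  · obtain ⟨a, b, h1, h2, h3, h4⟩ := key y x hy hx h.symm (by rw [mul_comm, heq]) hd
    exact ⟨a, b, h1, h2, Or.inr ⟨h3, h4⟩⟩
  · obtain ⟨a, b, h1, h2, h3, h4⟩ := key x y hx hy h heq hd
    exact ⟨a, b, h1, h2, Or.inl ⟨h3, h4⟩⟩

lemma pdiv {P : ℤ} (hP : Prime P) {M n e c d : ℤ} (hd : ¬ P ∣ d)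
    (h : n ^ 2 = c * M ^ 4 + d * P * e ^ 4) (hM : P ∣ M) : P ∣ e := by
  obtain ⟨M, rfl⟩ := hM
  have : P ∣ n := by
    apply hP.dvd_of_dvd_pow (n := 2)
    rw [h]
    exact ⟨c * P ^ 3 * M ^ 4 + d * e ^ 4, by ring⟩
  obtain ⟨n, rfl⟩ := this
  have h2 : d * e ^ 4 = P * (n ^ 2 - c * P ^ 2 * M ^ 4) := by
    apply mul_left_cancel₀ hP.ne_zero
    linear_combination -h
  have h3 : P ∣ d * e ^ 4 := ⟨_, h2⟩
  exact hP.dvd_of_dvd_pow ((hP.dvd_or_dvd h3).resolve_left hd)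

lemma pcop {P : ℤ} (hP : Prime P) {M n e c d : ℤ} (hd : ¬ P ∣ d) (hc : IsCoprime M e)
    (h : n ^ 2 = c * M ^ 4 + d * P * e ^ 4) : IsCoprime M P := by
  rw [isCoprime_comm]
  refine (hP.irreducible.coprime_iff_not_dvd).2 fun hM => ?_
  exact hP.not_isUnit (hc.isUnit_of_dvd' hM (pdiv hP hd h hM))


lemma caseD {P : ℤ} (h16 : P % 16 = 3 ∨ P % 16 = 13 ∨ P % 16 = 11) {a b c : ℤ} (hc : IsCoprime a b)
    (h : a ^ 4 + c ^ 2 = P * b ^ 4) : False := by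
  have h1 := fourth_mod a
  have h2 := mulP_mod h16 b
  have h3 := sq_mod c
  have h4 := not_both_even hc
  omega

lemma pndvd_neg_one {P : ℤ} (hP : Prime P) : ¬ P ∣ (-1) := fun h =>
  hP.not_isUnit (isUnit_of_dvd_unit h (by simp))

lemma pndvd_four {P : ℤ} (hP : Prime P)
    (h16 : P % 16 = 3 ∨ P % 16 = 13 ∨ P % 16 = 11) : ¬ P ∣ 4 := fun h => by
  have h' : P ∣ 2 ^ 2 := by norm_num; exact h
  have h2 := hP.dvd_of_dvd_pow h'
  have := odd_cop (a := P) (by omega)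
  exact hP.not_isUnit (this.isUnit_of_dvd' h2 dvd_rfl)

lemma pos_of_sum_prod {x y : ℤ} (h : 0 ≤ x + y) (h' : 0 < x * y) : 0 < x ∧ 0 < y := by
  rcases pos_and_pos_or_neg_and_neg_of_mul_pos h' with h | h
  · exact h
  · omega


lemma caseAodd {P : ℤ} (hP : Prime P) (hpos : 0 < P)
    (h16 : P % 16 = 3 ∨ P % 16 = 13 ∨ P % 16 = 11) {M N e : ℤ} (ho : e % 2 = 1) (hc : IsCoprime M e)
    (h : N ^ 2 = M ^ 4 - P * e ^ 4) : False := by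
  have hcP := pcop hP (pndvd_neg_one hP) hc (n := N) (c := 1) (by linarith)
  have hprod : (M ^ 2 - N) * (M ^ 2 + N) = P * e ^ 4 := by linear_combination -h
  have h2P := odd_cop (a := P) (by omega)
  have h2e := odd_cop ho
  have hcop : IsCoprime (M ^ 2 - N) (M ^ 2 + N) := by
    apply cop_add
    rw [hprod, show M ^ 2 - N + (M ^ 2 + N) = 2 * M ^ 2 by ring]
    exact IsCoprime.mul_left (h2P.mul_right h2e.pow_right)
      ((hcP.mul_right hc.pow_right).pow_left)
  have he : e ≠ 0 := by omega
  obtain ⟨hx, hy⟩ := pos_of_sum_prod (x := M ^ 2 - N) (y := M ^ 2 + N)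
    (by nlinarith [sq_nonneg M]) (by rw [hprod]; positivity)
  obtain ⟨a, b, hab, heab, hh⟩ := split hP hpos hx hy hcop hprod
  have hs : 2 * M ^ 2 = a ^ 4 + P * b ^ 4 := by
    rcases hh with ⟨h1, h2⟩ | ⟨h1, h2⟩ <;> linarith
  have h1 := fourth_mod a
  have h2 := mulP_mod h16 b
  have h3 := sq_mod M
  have h4 := not_both_even hab
  omega

lemma caseC {P : ℤ} (hP : Prime P) (hpos : 0 < P)
    (h16 : P % 16 = 3 ∨ P % 16 = 13 ∨ P % 16 = 11) {n k b : ℤ} (ho : b % 2 = 1) (hc : IsCoprime k b)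
    (h : n ^ 2 = 4 * k ^ 4 + P * b ^ 4) : False := by
  wlog hn : 0 ≤ n generalizing n
  · exact this (n := -n) (by rw [neg_sq, h]) (by omega)
  have hcP := pcop hP (d := 1) (fun h => hP.not_isUnit (isUnit_of_dvd_one h)) hc (n := n) (c := 4)
    (by linarith)
  have hprod : (n - 2 * k ^ 2) * (n + 2 * k ^ 2) = P * b ^ 4 := by linear_combination h
  have h2P := odd_cop (a := P) (by omega)
  have h2e := odd_cop ho
  have h2 : IsCoprime 2 (P * b ^ 4) := h2P.mul_right h2e.pow_right
  have hcop : IsCoprime (n - 2 * k ^ 2) (n + 2 * k ^ 2) := by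
    apply cop_sub
    rw [hprod, show n + 2 * k ^ 2 - (n - 2 * k ^ 2) = 2 * (2 * k ^ 2) by ring]
    exact h2.mul_left (h2.mul_left ((hcP.mul_right hc.pow_right).pow_left))
  have he : b ≠ 0 := by omega
  obtain ⟨hx, hy⟩ := pos_of_sum_prod (x := n - 2 * k ^ 2) (y := n + 2 * k ^ 2)
    (by linarith) (by rw [hprod]; positivity)
  obtain ⟨a, b', hab, heab, hh⟩ := split hP hpos hx hy hcop hprod
  rcases hh with ⟨h1, h2⟩ | ⟨h1, h2⟩
  · exact caseD h16 (c := 2 * k) hab (by linarith)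
  · have ho' : b' % 2 = 1 := by
      by_contra hcon
      have : (2 : ℤ) ∣ |b'| := (dvd_abs _ _).2 (by omega)
      have : (2 : ℤ) ∣ b := (dvd_abs _ _).1 (heab ▸ this.mul_left _)
      omega
    exact caseAodd hP hpos h16 ho' hab (N := 2 * k) (by linarith)

lemma stepB {P : ℤ} (hP : Prime P) (hpos : 0 < P)
    (h16 : P % 16 = 3 ∨ P % 16 = 13 ∨ P % 16 = 11) {M N e : ℤ} (he : e ≠ 0) (hc : IsCoprime M e)
    (h : N ^ 2 = M ^ 4 + 4 * P * e ^ 4) :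
    ∃ M' N' e' : ℤ, e' ≠ 0 ∧ IsCoprime M' e' ∧ |e'| ≤ |e| ∧ N' ^ 2 = M' ^ 4 - P * e' ^ 4 := by
  wlog hn : 0 ≤ N generalizing N
  · exact this (N := -N) (by rw [neg_sq, h]) (by omega)
  have hcP := pcop hP (pndvd_four hP h16) hc (n := N) (c := 1) (by linarith)
  have f1 := fourth_mod M
  have f2 := sq_mod N
  have f4 := not_both_even hc
  have f5 : (4 * P * e ^ 4) % 4 = 0 := by rw [mul_assoc]; omega
  rcases Int.emod_two_eq_zero_or_one M with hM | hM
  · exfalso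
    obtain ⟨k, rfl⟩ : ∃ k, M = 2 * k := ⟨M / 2, by omega⟩
    obtain ⟨n, rfl⟩ : ∃ k, N = 2 * k := ⟨N / 2, by omega⟩
    exact caseC hP hpos h16 (n := n) (k := k) (b := e) (by omega) hc.of_mul_left_right
      (by linarith)
  have hN : N % 2 = 1 := by omega
  have g := sq_mod M
  obtain ⟨s, hs⟩ : ∃ s, N - M ^ 2 = 2 * s := ⟨(N - M ^ 2) / 2, by omega⟩
  obtain ⟨t, ht⟩ : ∃ t, N + M ^ 2 = 2 * t := ⟨(N + M ^ 2) / 2, by omega⟩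
  have hprod : s * t = P * e ^ 4 := by
    have : (2 * s) * (2 * t) = 4 * (P * e ^ 4) := by
      rw [← hs, ← ht]; linear_combination h
    linarith
  have hts : t - s = M ^ 2 := by linarith
  have hcop : IsCoprime s t := by
    apply cop_sub
    rw [hprod, hts]
    exact (hcP.mul_right hc.pow_right).pow_left
  obtain ⟨hx, hy⟩ := pos_of_sum_prod (x := s) (y := t)
    (by linarith) (by rw [hprod]; positivity)
  obtain ⟨a, b, hab, heab, hh⟩ := split hP hpos hx hy hcop hprod
  have hae : 0 < |a| * |b| := by rw [← heab]; exact abs_pos.2 he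
  rcases hh with ⟨h1, h2⟩ | ⟨h1, h2⟩
  · exact (caseD h16 (c := M) hab (by linarith)).elim
  · have ha : 0 < |a| := pos_of_mul_pos_left hae (abs_nonneg b)
    have hb : 0 < |b| := pos_of_mul_pos_right hae (abs_nonneg a)
    refine ⟨a, M, b, abs_pos.1 hb, hab, ?_, by linarith⟩
    rw [heab]; nlinarith

lemma stepA {P : ℤ} (hP : Prime P) (hpos : 0 < P)
    (h16 : P % 16 = 3 ∨ P % 16 = 13 ∨ P % 16 = 11) {M N e : ℤ} (he : e ≠ 0) (hc : IsCoprime M e)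
    (h : N ^ 2 = M ^ 4 - P * e ^ 4) :
    ∃ M' N' e' : ℤ, e' ≠ 0 ∧ IsCoprime M' e' ∧ 2 * |e'| ≤ |e| ∧
      N' ^ 2 = M' ^ 4 + 4 * P * e' ^ 4 := by
  have hcP := pcop hP (pndvd_neg_one hP) hc (n := N) (c := 1) (by linarith)
  rcases Int.emod_two_eq_zero_or_one e with ho | ho
  swap
  · exact (caseAodd hP hpos h16 ho hc h).elim
  obtain ⟨f, rfl⟩ : ∃ k, e = 2 * k := ⟨e / 2, by omega⟩
  have f1 := fourth_mod M
  have f2 := sq_mod N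
  have f3 := sq_mod M
  have f4 := not_both_even hc
  have f5 := mulP_mod h16 (2 * f)
  obtain ⟨s, hs⟩ : ∃ s, M ^ 2 - N = 2 * s := ⟨(M ^ 2 - N) / 2, by omega⟩
  obtain ⟨t, ht⟩ : ∃ t, M ^ 2 + N = 2 * t := ⟨(M ^ 2 + N) / 2, by omega⟩
  have hprod : s * t = 4 * (P * f ^ 4) := by
    have : (2 * s) * (2 * t) = 16 * (P * f ^ 4) := by
      rw [← hs, ← ht]; linear_combination -h
    linarith
  have hts : s + t = M ^ 2 := by linarith
  have hf : f ≠ 0 := by rintro rfl; simp at he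
  have h2M : IsCoprime M 2 := hc.of_mul_right_left
  have hMf : IsCoprime M f := hc.of_mul_right_right
  have hcop : IsCoprime s t := by
    apply cop_add
    rw [hprod, hts]
    exact (IsCoprime.mul_right (by simpa using h2M.mul_right h2M)
      (hcP.mul_right hMf.pow_right)).pow_left
  obtain ⟨hx, hy⟩ := pos_of_sum_prod (x := s) (y := t)
    (by nlinarith [sq_nonneg M]) (by rw [hprod]; positivity)
  have key : ∀ s t : ℤ, s * t = 4 * (P * f ^ 4) → s + t = M ^ 2 → 0 < s → 0 < t →
      IsCoprime s t → t % 2 = 0 → ∃ M' N' e' : ℤ, e' ≠ 0 ∧ IsCoprime M' e' ∧ 2 * |e'| ≤ |2 * f| ∧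
      N' ^ 2 = M' ^ 4 + 4 * P * e' ^ 4 := by
    intro s t hprod hts hx hy hcop ht2
    have hs2 : s % 2 = 1 := by omega
    have h4 : (4 : ℤ) ∣ t := by
      have h4s : IsCoprime 4 s := by
        have := odd_cop hs2
        simpa using this.mul_left this
      exact h4s.dvd_of_dvd_mul_left ⟨_, hprod⟩
    obtain ⟨t, rfl⟩ := h4
    obtain ⟨a, b, hab, heab, hh⟩ := split hP hpos hx (y := t) (e := f) (by omega)
      hcop.of_mul_right_right (by linarith)
    have hae : 0 < |a| * |b| := by rw [← heab]; exact abs_pos.2 hf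
    have ha : 0 < |a| := pos_of_mul_pos_left hae (abs_nonneg b)
    have hb : 0 < |b| := pos_of_mul_pos_right hae (abs_nonneg a)
    rcases hh with ⟨h1, h2⟩ | ⟨h1, h2⟩
    · refine ⟨a, M, b, abs_pos.1 hb, hab, ?_, by rw [← hts, h1, h2]; ring⟩
      rw [abs_mul, heab]
      norm_num
      nlinarith
    · exfalso
      have := mulP_mod h16 b
      exact caseC hP hpos h16 (n := M) (k := a) (b := b) (by omega) hab
        (by rw [← hts, h1, h2]; ring)
  rcases Int.emod_two_eq_zero_or_one t with ho | ho
  · exact key s t hprod hts hx hy hcop ho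
  · refine key t s (by rw [mul_comm, hprod]) (by rw [add_comm, hts]) hy hx hcop.symm ?_
    have := sq_mod M
    omega

lemma noA {P : ℤ} (hP : Prime P) (hpos : 0 < P)
    (h16 : P % 16 = 3 ∨ P % 16 = 13 ∨ P % 16 = 11) : ∀ {M N e : ℤ}, e ≠ 0 → IsCoprime M e → N ^ 2 = M ^ 4 - P * e ^ 4 → False := by
  suffices H : ∀ (n : ℕ) (M N e : ℤ), e.natAbs = n → e ≠ 0 → IsCoprime M e →
      N ^ 2 = M ^ 4 - P * e ^ 4 → False by
    intro M N e; exact H _ M N e rfl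
  intro n
  induction n using Nat.strong_induction_on with
  | _ n ih =>
    intro M N e hn he hc h
    obtain ⟨M1, N1, e1, he1, hc1, hle1, h1⟩ := stepA hP hpos h16 he hc h
    obtain ⟨M2, N2, e2, he2, hc2, hle2, h2⟩ := stepB hP hpos h16 he1 hc1 h1
    refine ih e2.natAbs ?_ M2 N2 e2 rfl he2 hc2 h2
    have := abs_pos.2 he2
    rw [Int.abs_eq_natAbs] at this hle1 hle2
    rw [Int.abs_eq_natAbs] at hle1 hle2
    omega

lemma noB {P : ℤ} (hP : Prime P) (hpos : 0 < P)
    (h16 : P % 16 = 3 ∨ P % 16 = 13 ∨ P % 16 = 11) {M N e : ℤ} (he : e ≠ 0) (hc : IsCoprime M e)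
    (h : N ^ 2 = M ^ 4 + 4 * P * e ^ 4) : False := by
  obtain ⟨M2, N2, e2, he2, hc2, hle2, h2⟩ := stepB hP hpos h16 he hc h
  exact noA hP hpos h16 he2 hc2 h2

lemma nt2_aux {P : ℤ} (hP : Prime P) (hpos : 0 < P)
    (h16 : P % 16 = 3 ∨ P % 16 = 13 ∨ P % 16 = 11) {r s w : ℤ} (hs : s ≠ 0) (hc : IsCoprime r s) (hcP : IsCoprime r P)
    (h : r * s * (r ^ 2 - P * s ^ 2) = w ^ 2) : False := by
  have hrT : IsCoprime r (r ^ 2 - P * s ^ 2) := by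
    have : IsCoprime r (P * s ^ 2) := hcP.mul_right hc.pow_right
    obtain ⟨u, v, huv⟩ := this
    exact ⟨u + v * r, -v, by linear_combination huv⟩
  have hsT : IsCoprime s (r ^ 2 - P * s ^ 2) := by
    have : IsCoprime s (r ^ 2) := hc.symm.pow_right
    obtain ⟨u, v, huv⟩ := this
    exact ⟨u + v * P * s, v, by linear_combination huv⟩
  obtain ⟨a, ha⟩ := Int.sq_of_isCoprime (hc.mul_right hrT) (by rw [← h]; ring)
  obtain ⟨b, hb⟩ := Int.sq_of_isCoprime (hc.symm.mul_right hsT)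
    (show s * (r * (r ^ 2 - P * s ^ 2)) = w ^ 2 by rw [← h]; ring)
  obtain ⟨d, hd⟩ := Int.sq_of_isCoprime (hrT.symm.mul_right hsT.symm)
    (show (r ^ 2 - P * s ^ 2) * (r * s) = w ^ 2 by rw [← h]; ring)
  have hb0 : b ≠ 0 := by rintro rfl; simp at hb; exact hs hb
  have hr2 : r ^ 2 = a ^ 4 := by rcases ha with rfl | rfl <;> ring
  have hs2 : s ^ 2 = b ^ 4 := by rcases hb with rfl | rfl <;> ring
  have hab : IsCoprime a b := by
    have : IsCoprime (r ^ 2) (s ^ 2) := hc.pow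
    rw [hr2, hs2] at this
    exact (IsCoprime.pow_iff four_pos four_pos).1 this
  rw [hr2, hs2] at hd
  rcases hd with hd | hd
  · exact noA hP hpos h16 hb0 hab hd.symm
  · exact caseD h16 (c := d) hab (by linarith)

lemma nt2_int {P : ℤ} (hP : Prime P) (hpos : 0 < P)
    (h16 : P % 16 = 3 ∨ P % 16 = 13 ∨ P % 16 = 11) {r s w : ℤ} (hr : r ≠ 0) (hs : s ≠ 0) (hc : IsCoprime r s)
    (h : r * s * (r ^ 2 - P * s ^ 2) = w ^ 2) : False := by
  by_cases hPr : P ∣ r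
  · have hsP : IsCoprime s P := by
      rw [isCoprime_comm]
      exact (hP.irreducible.coprime_iff_not_dvd).2 fun hM =>
        hP.not_isUnit (hc.isUnit_of_dvd' hPr hM)
    obtain ⟨r, rfl⟩ := hPr
    have : P ∣ w := by
      apply hP.dvd_of_dvd_pow (n := 2)
      rw [← h]; exact ⟨r * s * ((P * r) ^ 2 - P * s ^ 2), by ring⟩
    obtain ⟨w, rfl⟩ := this
    refine nt2_aux hP hpos h16 (r := s) (s := -r) (w := w) ?_ ?_ hsP ?_
    · rintro h; simp at h; simp [h] at hr
    · exact hc.symm.of_mul_right_right.neg_right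
    · apply mul_left_cancel₀ (pow_ne_zero 2 hpos.ne')
      linear_combination h
  · have : IsCoprime r P := ((hP.irreducible.coprime_iff_not_dvd).2 hPr).symm
    exact nt2_aux hP hpos h16 hs hc this h

lemma sq3 {x y z w : ℤ} (hx : 0 < x) (hy : 0 < y) (hz : 0 < z) (hxy : IsCoprime x y)
    (hxz : IsCoprime x z) (hyz : IsCoprime y z) (h : x * y * z = w ^ 2) :
    ∃ a b c, x = a ^ 2 ∧ y = b ^ 2 ∧ z = c ^ 2 := by
  obtain ⟨a, -, ha⟩ := sq_of_pos_cop hx (hxy.mul_right hxz) (by rw [← h]; ring)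
  obtain ⟨b, -, hb⟩ := sq_of_pos_cop hy (hxy.symm.mul_right hyz)
    (show y * (x * z) = w ^ 2 by rw [← h]; ring)
  obtain ⟨c, -, hc⟩ := sq_of_pos_cop hz (hxz.symm.mul_right hyz.symm)
    (show z * (x * y) = w ^ 2 by rw [← h]; ring)
  exact ⟨a, b, c, ha, hb, hc⟩

lemma nt1_aux {P : ℤ} (hP : Prime P) (hpos : 0 < P)
    (h16 : P % 16 = 3 ∨ P % 16 = 13 ∨ P % 16 = 11) {r s w : ℤ} (hr : 0 < r) (hs : 0 < s) (hc : IsCoprime r s) (hcP : IsCoprime r P)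
    (h : 2 * r * s * (r ^ 2 + P * s ^ 2) = w ^ 2) : False := by
  have hrT : IsCoprime r (r ^ 2 + P * s ^ 2) := by
    have : IsCoprime r (P * s ^ 2) := hcP.mul_right hc.pow_right
    obtain ⟨u, v, huv⟩ := this
    exact ⟨u - v * r, v, by linear_combination huv⟩
  have hsT : IsCoprime s (r ^ 2 + P * s ^ 2) := by
    have : IsCoprime s (r ^ 2) := hc.symm.pow_right
    obtain ⟨u, v, huv⟩ := this
    exact ⟨u - v * P * s, v, by linear_combination huv⟩
  have hw : (2 : ℤ) ∣ w := by
    apply Int.prime_two.dvd_of_dvd_pow (n := 2)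
    rw [← h]; exact ⟨r * s * (r ^ 2 + P * s ^ 2), by ring⟩
  obtain ⟨w, rfl⟩ := hw
  have f := not_both_even hc
  have hTpos : 0 < r ^ 2 + P * s ^ 2 := by positivity
  rcases Int.emod_two_eq_zero_or_one r with h1 | h1
  · obtain ⟨r, rfl⟩ : ∃ k, r = 2 * k := ⟨r / 2, by omega⟩
    obtain ⟨a, b, c, ha, hb, hT⟩ := sq3 (x := r) (by omega) hs hTpos
      hc.of_mul_left_right hrT.of_mul_left_right hsT (w := w) (by linarith)
    have hab := hc.of_mul_left_right
    rw [ha, hb] at hab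
    rw [ha, hb] at hT
    have hb2 : b % 2 = 1 := by
      have := sq_mod b
      omega
    exact caseC hP hpos h16 (n := c) (k := a) (b := b) hb2
      ((IsCoprime.pow_iff two_pos two_pos).1 hab) (by linarith)
  rcases Int.emod_two_eq_zero_or_one s with h2 | h2
  · obtain ⟨s, rfl⟩ : ∃ k, s = 2 * k := ⟨s / 2, by omega⟩
    obtain ⟨a, b, c, ha, hb, hT⟩ := sq3 (y := s) hr (by omega) hTpos
      hc.of_mul_right_right hrT hsT.of_mul_left_right (w := w) (by linarith)
    have hab := hc.of_mul_right_right
    rw [ha, hb] at hab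
    rw [ha, hb] at hT
    have hb0 : b ≠ 0 := by rintro rfl; simp at hb; omega
    exact noB hP hpos h16 (N := c) hb0
      ((IsCoprime.pow_iff two_pos two_pos).1 hab) (by linarith)
  · obtain ⟨T, hT'⟩ : ∃ T, r ^ 2 + P * s ^ 2 = 2 * T := by
      refine ⟨(r ^ 2 + P * s ^ 2) / 2, ?_⟩
      have : (r ^ 2 + P * s ^ 2) % 2 = 0 := by
        have hP2 : P % 2 = 1 := by omega
        simp [pow_two, Int.add_emod, Int.mul_emod, h1, h2, hP2]
      omega
    rw [hT'] at hrT hsT hTpos h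
    obtain ⟨a, b, c, ha, hb, hT⟩ := sq3 (z := T) hr hs (by omega) hc hrT.of_mul_right_right
      hsT.of_mul_right_right (w := w) (by linarith)
    rw [ha, hb, hT] at hT'
    have e1 := fourth_mod a
    have e2 := mulP_mod h16 b
    have e3 := sq_mod c
    have e4 := sq_mod a
    have e5 := sq_mod b
    have e6 : a ^ 4 + P * b ^ 4 = 2 * c ^ 2 := by linarith
    omega

lemma nt1_int {P : ℤ} (hP : Prime P) (hpos : 0 < P)
    (h16 : P % 16 = 3 ∨ P % 16 = 13 ∨ P % 16 = 11) {r s w : ℤ} (hr : 0 < r) (hs : 0 < s) (hc : IsCoprime r s)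
    (h : 2 * r * s * (r ^ 2 + P * s ^ 2) = w ^ 2) : False := by
  by_cases hPr : P ∣ r
  · have hsP : IsCoprime s P := by
      rw [isCoprime_comm]
      exact (hP.irreducible.coprime_iff_not_dvd).2 fun hM =>
        hP.not_isUnit (hc.isUnit_of_dvd' hPr hM)
    obtain ⟨r, rfl⟩ := hPr
    have : P ∣ w := by
      apply hP.dvd_of_dvd_pow (n := 2)
      rw [← h]; exact ⟨2 * r * s * ((P * r) ^ 2 + P * s ^ 2), by ring⟩
    obtain ⟨w, rfl⟩ := this
    refine nt1_aux hP hpos h16 (r := s) (s := r) (w := w) hs ?_ ?_ hsP ?_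
    · exact pos_of_mul_pos_right hr hpos.le
    · exact hc.symm.of_mul_right_right
    · apply mul_left_cancel₀ (pow_ne_zero 2 hpos.ne')
      linear_combination h
  · have : IsCoprime r P := ((hP.irreducible.coprime_iff_not_dvd).2 hPr).symm
    exact nt1_aux hP hpos h16 hr hs hc this h

lemma nt1 {P : ℤ} (hP : Prime P) (hpos : 0 < P)
    (h16 : P % 16 = 3 ∨ P % 16 = 13 ∨ P % 16 = 11) {u v : ℚ} (h : u ^ 2 + P = 2 * u * v ^ 2) : False := by
  have hPq : (0 : ℚ) < P := by exact_mod_cast hpos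
  have hu : 0 < u := by
    by_contra hcon
    have := sq_nonneg u
    nlinarith [mul_nonneg (neg_nonneg.2 (not_lt.1 hcon)) (sq_nonneg v)]
  have hs0 : (u.den : ℚ) ≠ 0 := by exact_mod_cast u.den_ne_zero
  have hun : u * u.den = u.num := Rat.mul_den_eq_num u
  have hsq : IsSquare ((2 * u.num * (u.den : ℤ) * (u.num ^ 2 + P * (u.den : ℤ) ^ 2) : ℤ) : ℚ) := by
    refine ⟨2 * u.num * u.den * v, ?_⟩
    push_cast
    rw [← hun]
    linear_combination 2 * u * u.den ^ 4 * h
  rw [Rat.isSquare_intCast_iff] at hsq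
  obtain ⟨w, hw⟩ := hsq
  exact nt1_int hP hpos h16 (Rat.num_pos.2 hu) (by exact_mod_cast u.den_pos)
    (Int.isCoprime_iff_gcd_eq_one.2 (by simpa [Int.gcd] using u.reduced)) (hw.trans (pow_two w).symm)

lemma nt2 {P : ℤ} (hP : Prime P) (hpos : 0 < P)
    (h16 : P % 16 = 3 ∨ P % 16 = 13 ∨ P % 16 = 11) {u v : ℚ} (h : u ^ 2 - 4 * P = 2 * u * v ^ 2) : False := by
  have hPq : (0 : ℚ) < P := by exact_mod_cast hpos
  obtain ⟨u, rfl⟩ : ∃ t, u = 2 * t := ⟨u / 2, by ring⟩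
  have hu : u ≠ 0 := by
    rintro rfl
    linarith
  have hun : u * u.den = u.num := Rat.mul_den_eq_num u
  have hsq : IsSquare ((u.num * (u.den : ℤ) * (u.num ^ 2 - P * (u.den : ℤ) ^ 2) : ℤ) : ℚ) := by
    refine ⟨u.num * u.den * v, ?_⟩
    push_cast
    rw [← hun]
    linear_combination u * u.den ^ 4 / 4 * h
  rw [Rat.isSquare_intCast_iff] at hsq
  obtain ⟨w, hw⟩ := hsq
  exact nt2_int hP hpos h16 (Rat.num_ne_zero.2 hu) (by exact_mod_cast u.den_ne_zero)
    (Int.isCoprime_iff_gcd_eq_one.2 (by simpa [Int.gcd] using u.reduced)) (hw.trans (pow_two w).symm)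

lemma coeff_argument {m u0 u1 u2 u3 : ℚ} (hno : ∀ u v : ℚ, u ^ 2 + m ≠ 2 * u * v ^ 2)
    (h1 : 2 * u0 * u1 + 2 * m * u2 * u3 = 1) (h2 : u1 ^ 2 + m * u3 ^ 2 + 2 * u0 * u2 = 0)
    (h3 : u0 * u3 + u1 * u2 = 0) : False := by
  by_cases hu3 : u3 = 0
  · subst hu3
    simp at h1 h2 h3
    rcases h3 with rfl | rfl
    · simp at h1
    · have : u1 = 0 := by simpa using h2
      subst this
      simp at h1
  · apply hno (u1 / u3) (u2 / u3)
    field_simp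
    linear_combination u3 * h2 - 2 * u2 * h3

lemma exists_poly_rep {f : ℚ[X]} (hfm : f.Monic) (hfd : f.natDegree = 4)
    {E : Type*} [Field E] [Algebra ℚ E] {x z : E} (hx : minpoly ℚ x = f) (hint : IsIntegral ℚ x)
    (hz : z ∈ IntermediateField.adjoin ℚ {x}) :
    ∃ q : ℚ[X], q.natDegree < 4 ∧ aeval x q = z := by
  have hzm : z ∈ Algebra.adjoin ℚ {x} := by
    rw [← IntermediateField.adjoin_simple_toSubalgebra_of_isAlgebraic hint.isAlgebraic]
    exact hz
  rw [Algebra.adjoin_singleton_eq_range_aeval] at hzm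
  obtain ⟨q, hq⟩ := hzm
  refine ⟨q %ₘ f, ?_, ?_⟩
  · rw [← hfd]
    exact natDegree_modByMonic_lt _ hfm (fun h => by rw [h] at hfd; simp at hfd)
  · have := modByMonic_add_div q f
    have h2 := congrArg (aeval x) this
    have h3 : aeval x f = 0 := by rw [← hx]; exact minpoly.aeval ℚ x
    rw [map_add, map_mul, h3, zero_mul, add_zero] at h2
    rw [h2]
    exact hq

lemma quad_no_root {m : ℚ} (hno : ∀ u v : ℚ, u ^ 2 + m ≠ 2 * u * v ^ 2) (b c : ℚ)
    {E : Type*} [Field E] [Algebra ℚ E] {x z : E} (hx : minpoly ℚ x = X ^ 4 - C m)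
    (hx4 : x ^ 4 = algebraMap ℚ E m) {q : ℚ[X]} (hqd : q.natDegree < 4) (hq : aeval x q = z)
    (hzE : z ^ 2 + algebraMap ℚ E b * z + algebraMap ℚ E c - x = 0) : False := by
  have hfd : (X ^ 4 - C m : ℚ[X]).natDegree = 4 := natDegree_X_pow_sub_C
  have hq4 := q.as_sum_range' 4 hqd
  simp only [Finset.sum_range_succ, Finset.sum_range_zero, ← C_mul_X_pow_eq_monomial] at hq4
  generalize q.coeff 0 = v0 at hq4
  generalize q.coeff 1 = u1 at hq4
  generalize q.coeff 2 = u2 at hq4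
  generalize q.coeff 3 = u3 at hq4
  have hzval : z = algebraMap ℚ E v0 + algebraMap ℚ E u1 * x + algebraMap ℚ E u2 * x ^ 2 +
      algebraMap ℚ E u3 * x ^ 3 := by
    rw [← hq, hq4]
    simp
  set u0 : ℚ := v0 + b / 2 with hu0
  let R : ℚ[X] := C (u0 ^ 2 + m * u2 ^ 2 + 2 * m * u1 * u3 + c - b ^ 2 / 4)
    + C (2 * u0 * u1 + 2 * m * u2 * u3 - 1) * X
    + C (u1 ^ 2 + m * u3 ^ 2 + 2 * u0 * u2) * X ^ 2
    + C (2 * (u0 * u3 + u1 * u2)) * X ^ 3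
  have hR : aeval x R = 0 := by
    simp only [R, map_add, map_mul, map_pow, aeval_C, aeval_X, hu0, map_sub, map_div₀, map_one,
      map_ofNat]
    rw [← hzE, hzval, ← sub_eq_zero]
    have hx5 : x ^ 5 = algebraMap ℚ E m * x := by rw [pow_succ, hx4]
    have hx6 : x ^ 6 = algebraMap ℚ E m * x ^ 2 := by
      rw [show x ^ 6 = x ^ 4 * x ^ 2 by ring, hx4]
    have : CharZero E := algebraRat.charZero E
    field_simp
    linear_combination (-16 * (algebraMap ℚ E u2 ^ 2 + 2 * algebraMap ℚ E u1 * algebraMap ℚ E u3)) * hx4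
      - 32 * (algebraMap ℚ E u2 * algebraMap ℚ E u3) * hx5 - 16 * (algebraMap ℚ E u3 ^ 2) * hx6
  have hR0 : R = 0 := by
    by_contra hne
    have := natDegree_le_natDegree (minpoly.degree_le_of_ne_zero ℚ x hne hR)
    rw [hx, hfd] at this
    have h3 : R.natDegree ≤ 3 := by
      simp only [R]
      compute_degree
    omega
  have c1 : R.coeff 1 = 0 := by rw [hR0]; simp
  have c2 : R.coeff 2 = 0 := by rw [hR0]; simp
  have c3 : R.coeff 3 = 0 := by rw [hR0]; simp
  simp only [R, coeff_add, coeff_C_mul, coeff_X_pow, coeff_C, coeff_X] at c1 c2 c3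
  norm_num at c1 c2 c3
  exact coeff_argument hno (by linarith) c2 c3

lemma quad_irr {m : ℚ} (hirr : Irreducible (X ^ 4 - C m : ℚ[X]))
    (hno : ∀ u v : ℚ, u ^ 2 + m ≠ 2 * u * v ^ 2) (b c : ℚ) :
    Irreducible ((X ^ 4 - C m : ℚ[X]).comp (X ^ 2 + C b * X + C c)) := by
  have hfm : (X ^ 4 - C m : ℚ[X]).Monic := monic_X_pow_sub_C m four_ne_zero
  have hfd : (X ^ 4 - C m : ℚ[X]).natDegree = 4 := natDegree_X_pow_sub_C
  refine Polynomial.irreducible_comp hfm (by monicity!) hirr ?_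
  intro E _ _ x hx
  have hint : IsIntegral ℚ x := by
    by_contra hcon
    rw [minpoly.eq_zero hcon] at hx
    exact hfm.ne_zero hx.symm
  have hx4 : x ^ 4 = algebraMap ℚ E m := by
    have := minpoly.aeval ℚ x
    rw [hx] at this
    simpa [sub_eq_zero] using this
  set K := IntermediateField.adjoin ℚ {x} with hK
  set y : K := IntermediateField.AdjoinSimple.gen ℚ x with hy
  suffices H : Irreducible (X ^ 2 + C ((b : ℚ) : K) * X + C ((c : ℚ) : K) - C y : K[X]) by
    simp only [Polynomial.map_add, Polynomial.map_mul, Polynomial.map_pow, map_X, map_C,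
      eq_ratCast]
    exact H
  have hmon : (X ^ 2 + C ((b : ℚ) : K) * X + C ((c : ℚ) : K) - C y : K[X]).Monic := by
    monicity!
  have hdeg : (X ^ 2 + C ((b : ℚ) : K) * X + C ((c : ℚ) : K) - C y : K[X]).natDegree = 2 := by
    compute_degree!
  rw [hmon.irreducible_iff_roots_eq_zero_of_degree_le_three (by rw [hdeg]) (by rw [hdeg]; norm_num)]
  rw [Multiset.eq_zero_iff_forall_notMem]
  intro z hz
  have hz' := (mem_roots'.1 hz).2
  simp [IsRoot] at hz'
  have hzE : (z : E) ^ 2 + algebraMap ℚ E b * z + algebraMap ℚ E c - x = 0 := by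
    have := congrArg (algebraMap K E) hz'
    simpa [hy] using this
  obtain ⟨q, hqd, hq⟩ := exists_poly_rep hfm hfd hx hint z.2
  exact quad_no_root hno b c hx hx4 hqd hq hzE

lemma comp_linear_irr {f : ℚ[X]} (hf : Irreducible f) {a : ℚ} (ha : a ≠ 0) (b : ℚ) :
    Irreducible (f.comp (C a * X + C b)) := by
  let _ := invertibleOfNonzero ha
  have := (MulEquiv.irreducible_iff (algEquivCMulXAddC a b) (x := f)).2 hf
  rwa [algEquivCMulXAddC_apply, ← comp_eq_aeval] at this

lemma super_of_no_points {m : ℚ} (hirr : Irreducible (X ^ 4 - C m : ℚ[X]))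
    (hno : ∀ u v : ℚ, u ^ 2 + m ≠ 2 * u * v ^ 2) : IsSuperirreducible ℚ 2 (X ^ 4 - C m) := by
  refine ⟨hirr, fun g hg0 hg2 => ?_⟩
  rcases (show g.natDegree = 1 ∨ g.natDegree = 2 by omega) with hg | hg
  · have hg' := g.as_sum_range' 2 (by omega)
    simp only [Finset.sum_range_succ, Finset.sum_range_zero, ← C_mul_X_pow_eq_monomial] at hg'
    have ha : g.coeff 1 ≠ 0 := by
      rw [← hg]; simp; rintro rfl; simp at hg
    have := comp_linear_irr hirr ha (g.coeff 0)
    have e : g = C (g.coeff 1) * X + C (g.coeff 0) := by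
      rw [pow_zero, pow_one, mul_one, zero_add, add_comm] at hg'
      exact hg'
    rw [e]
    exact this
  · have hg' := g.as_sum_range' 3 (by omega)
    simp only [Finset.sum_range_succ, Finset.sum_range_zero, ← C_mul_X_pow_eq_monomial] at hg'
    have ha : g.coeff 2 ≠ 0 := by
      rw [← hg]; simp; rintro rfl; simp at hg
    generalize g.coeff 0 = c at hg'
    generalize g.coeff 1 = b at hg'
    generalize g.coeff 2 = a at hg' ha
    have hunit : IsUnit (C (a ^ 4) : ℚ[X]) := isUnit_C.2 (isUnit_iff_ne_zero.2 (pow_ne_zero 4 ha))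
    have hfa : Irreducible (X ^ 4 - C (m / a ^ 4) : ℚ[X]) := by
      have h := comp_linear_irr hirr ha 0
      have e : (X ^ 4 - C m : ℚ[X]).comp (C a * X + C 0) =
          C (a ^ 4) * (X ^ 4 - C (m / a ^ 4)) := by
        rw [mul_sub, ← C_mul, mul_div_cancel₀ _ (pow_ne_zero 4 ha)]
        simp
        ring
      rw [e] at h
      exact (irreducible_isUnit_mul hunit).1 h
    have hq := quad_irr hfa (b := b / a) (c := c / a) (by
      intro u v h
      apply hno (a ^ 2 * u) (a * v)
      field_simp at h
      linear_combination h)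
    have e : (X ^ 4 - C m : ℚ[X]).comp g = C (a ^ 4) *
        (X ^ 4 - C (m / a ^ 4)).comp (X ^ 2 + C (b / a) * X + C (c / a)) := by
      have e1 : g = C a * (X ^ 2 + C (b / a) * X + C (c / a)) := by
        rw [hg', mul_add, mul_add, ← mul_assoc, ← C_mul, ← C_mul, mul_div_cancel₀ _ ha,
          mul_div_cancel₀ _ ha]
        ring
      have e2 : (C m : ℚ[X]) = C (a ^ 4) * C (m / a ^ 4) := by
        rw [← C_mul, mul_div_cancel₀ _ (pow_ne_zero 4 ha)]
      rw [e2, e1]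
      simp only [sub_comp, pow_comp, X_comp, C_comp, mul_comp, C_pow]
      ring
    rw [e]
    exact (irreducible_isUnit_mul hunit).2 hq

theorem x4_add_4p_and_x4_sub_p_superirreducible (p : ℕ) (hp : p.Prime)
    (hmod : p % 16 = 3 ∨ p % 16 = 13 ∨ p % 16 = 11) :
    (Irreducible (X ^ 4 + C (4 * p : ℚ)) →
      IsSuperirreducible ℚ 2 (X ^ 4 + C (4 * p : ℚ))) ∧
    (Irreducible (X ^ 4 - C (p : ℚ)) →
      IsSuperirreducible ℚ 2 (X ^ 4 - C (p : ℚ))) := by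
  have hP : Prime (p : ℤ) := Nat.prime_iff_prime_int.1 hp
  have hpos : (0 : ℤ) < p := by exact_mod_cast hp.pos
  have h16 : (p : ℤ) % 16 = 3 ∨ (p : ℤ) % 16 = 13 ∨ (p : ℤ) % 16 = 11 := by omega
  constructor
  · intro h
    have e : (X ^ 4 + C (4 * p : ℚ)) = X ^ 4 - C (-(4 * p : ℚ)) := by
      rw [C_neg, sub_neg_eq_add]
    rw [e] at h ⊢
    refine super_of_no_points h fun u v huv => nt2 hP hpos h16 (u := u) (v := v) ?_
    push_cast
    linarith
  · intro h
    refine super_of_no_points h fun u v huv => nt1 hP hpos h16 (u := u) (v := v) ?_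
    push_cast
    linarith
end
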